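/- Let k ≥ 1, let X be a finite-dimensional real inner product space, let B_i be a maximally monotone set-valued operator on X for i = 1, …, k, and let ω_1, …, ω_k ∈ (0,1] with Σ_{i=1}^k ω_i = 1. Let σ, τ > 0 satisfy στ < 1 and assume there exist x ∈ X and v_i with (x, v_i) ∈ B_i for all i and Σ_{i=1}^k ω_i v_i = 0. Let sequences (x^n), (x̄^n), (y_i^n) in X satisfy x̄^0 = x^0 and, for every n ≥ 0: (σ^{-1}(y_i^n + σ x̄^n − y_i^{n+1}), y_i^{n+1}) ∈ B_i for each i; x^{n+1} = x^n − τ Σ_{i=1}^k ω_i y_i^{n+1}; x̄^{n+1} = 2x^{n+1} − x^n. Then there exist x* ∈ X and y_1*, …, y_k* ∈ X with (x*, y_i*) ∈ B_i for every i and Σ_{i=1}^k ω_i y_i* = 0, such that x^n → x* and y_i^n → y_i* for every i; in particular x* solves 0 ∈ Σ_{i=1}^k ω_i B_i x and (y_1*, …, y_k*) solves the corresponding dual problem. -/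

import Mathlib

/-!
The recursion is a proximal point iteration in a modified metric. Write `T y = ∑ i, ω i • y i` and
`z n = (x n, y (n+1))`. One step of the recursion reads `0 ∈ M (z (n+1) - z n) + A (z (n+1))`, where
`A (x, y) = (T y, (B i)⁻¹ (y i) - x)` is monotone, its zeros are the primal-dual solutions, and `M`
is the symmetric operator with quadratic form
`Q (a, b) = ‖a‖² / τ + (∑ i, ω i ‖b i‖²) / σ - 2 ⟪a, T b⟫` (`pdForm`).

Since `‖T b‖² ≤ ∑ i, ω i ‖b i‖²` by convexity, `σ τ < 1` makes `Q` coercive (`exists_pdForm_lower`).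
Monotonicity gives, for every solution `s`,
`Q (z (n+1) - s) + Q (z (n+1) - z n) ≤ Q (z n - s)` (`pdForm_step`). Thus `z` is bounded with
vanishing increments, its cluster points are solutions because graphs of maximally monotone
operators are closed (`IsMaxMonotoneOp.mem_of_tendsto`), and Opial's argument (`fejer_tendsto`)
gives convergence of the whole sequence.
-/

open RealInnerProductSpace Filter

/-- A set-valued operator, identified with its graph, is monotone. -/
def IsMonotoneOp {Z : Type*} [NormedAddCommGroup Z] [InnerProductSpace ℝ Z]
    (A : Set (Z × Z)) : Prop :=
  ∀ p ∈ A, ∀ q ∈ A, (0:ℝ) ≤ ⟪p.1 - q.1, p.2 - q.2⟫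

/-- A set-valued operator is maximally monotone. -/
def IsMaxMonotoneOp {Z : Type*} [NormedAddCommGroup Z] [InnerProductSpace ℝ Z]
    (A : Set (Z × Z)) : Prop :=
  IsMonotoneOp A ∧ ∀ B : Set (Z × Z), IsMonotoneOp B → A ⊆ B → B = A

/-! ### Closed graphs of maximally monotone operators -/

theorem IsMaxMonotoneOp.mem_of_forall {Z : Type*} [NormedAddCommGroup Z] [InnerProductSpace ℝ Z]
    {A : Set (Z × Z)} (hA : IsMaxMonotoneOp A) {p : Z × Z}
    (hp : ∀ q ∈ A, (0:ℝ) ≤ ⟪p.1 - q.1, p.2 - q.2⟫) : p ∈ A := by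
  have h : insert p A = A := by
    refine hA.2 _ ?_ (Set.subset_insert _ _)
    rintro a (rfl | ha) b (rfl | hb)
    · simp
    · exact hp b hb
    · have := hp a ha
      rwa [← neg_sub a.1, ← neg_sub a.2, inner_neg_neg] at this
    · exact hA.1 a ha b hb
  rw [← h]
  exact Set.mem_insert _ _

theorem IsMaxMonotoneOp.mem_of_tendsto {Z : Type*} [NormedAddCommGroup Z] [InnerProductSpace ℝ Z]
    {A : Set (Z × Z)} (hA : IsMaxMonotoneOp A) {u v : ℕ → Z} {a b : Z}
    (huv : ∀ n, (u n, v n) ∈ A) (hu : Tendsto u atTop (nhds a)) (hv : Tendsto v atTop (nhds b)) :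
    (a, b) ∈ A := by
  refine hA.mem_of_forall fun q hq => ?_
  have h : Tendsto (fun n => ⟪u n - q.1, v n - q.2⟫) atTop (nhds ⟪a - q.1, b - q.2⟫) :=
    (hu.sub_const _).inner (hv.sub_const _)
  exact ge_of_tendsto' h fun n => hA.1 _ (huv n) q hq

/-! ### Convergence of Fejér monotone sequences -/

/-- Opial's argument: a sequence that is Fejér monotone, with a gain, with respect to a coercive
continuous gauge `Q`, and all of whose cluster points lie in the reference set, converges to a
point of that set. -/
theorem fejer_tendsto {Z : Type*} [NormedAddCommGroup Z] [ProperSpace Z]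
    {Q : Z → ℝ} (hQc : Continuous Q) (hQ0 : Q 0 = 0)
    {c : ℝ} (hc : 0 < c) (hQ : ∀ w, c * ‖w‖ ^ 2 ≤ Q w)
    {S : Set Z} (hS : S.Nonempty) {z : ℕ → Z}
    (hstep : ∀ s ∈ S, ∀ n, Q (z (n + 1) - s) + Q (z (n + 1) - z n) ≤ Q (z n - s))
    (hcl : ∀ (p : Z) (φ : ℕ → ℕ), Tendsto (fun n => z (φ n)) atTop (nhds p) →
      Tendsto (fun n => z (φ n + 1)) atTop (nhds p) → p ∈ S) :
    ∃ s ∈ S, Tendsto z atTop (nhds s) := by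
  have hQnn : ∀ w, 0 ≤ Q w := fun w => le_trans (by positivity) (hQ w)
  have hanti : ∀ s ∈ S, Antitone fun n => Q (z n - s) := fun s hs =>
    antitone_nat_of_succ_le fun n => by linarith [hstep s hs n, hQnn (z (n + 1) - z n)]
  have hconv : ∀ s ∈ S, ∃ l, Tendsto (fun n => Q (z n - s)) atTop (nhds l) := fun s hs =>
    ⟨_, tendsto_atTop_ciInf (hanti s hs) ⟨0, by rintro _ ⟨n, rfl⟩; exact hQnn _⟩⟩
  -- Coercivity turns convergence of the gauge to zero into convergence in norm.
  have hto : ∀ w : ℕ → Z, Tendsto (fun n => Q (w n)) atTop (nhds 0) →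
      Tendsto w atTop (nhds 0) := by
    intro w hw
    have h1 : Tendsto (fun n => ‖w n‖ ^ 2) atTop (nhds 0) := by
      refine squeeze_zero (fun n => by positivity) (g := fun n => c⁻¹ * Q (w n)) (fun n => ?_) ?_
      · rw [inv_mul_eq_div, le_div_iff₀ hc, mul_comm]
        exact hQ _
      · simpa using hw.const_mul c⁻¹
    rw [tendsto_zero_iff_norm_tendsto_zero]
    simpa [Real.sqrt_sq] using h1.sqrt
  obtain ⟨s₀, hs₀⟩ := hS
  have hd : Tendsto (fun n => z (n + 1) - z n) atTop (nhds 0) := by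
    apply hto
    obtain ⟨l, hl⟩ := hconv s₀ hs₀
    have h2 := hl.sub (hl.comp (tendsto_add_atTop_nat 1))
    rw [sub_self] at h2
    refine squeeze_zero (fun n => hQnn _) (fun n => ?_) h2
    have := hstep s₀ hs₀ n
    simp only [Function.comp]
    linarith
  have hbd : ∀ n, z n ∈ Metric.closedBall s₀ (Real.sqrt (c⁻¹ * Q (z 0 - s₀))) := by
    intro n
    rw [mem_closedBall_iff_norm]
    apply Real.le_sqrt_of_sq_le
    rw [inv_mul_eq_div, le_div_iff₀ hc, mul_comm]
    exact (hQ _).trans (hanti s₀ hs₀ (Nat.zero_le n))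
  obtain ⟨p, -, φ, hφ, hp⟩ := (isCompact_closedBall s₀ _).tendsto_subseq hbd
  have hp' : Tendsto (fun n => z (φ n + 1)) atTop (nhds p) := by
    have := (hd.comp hφ.tendsto_atTop).add hp
    simpa [Function.comp_def] using this
  have hpS : p ∈ S := hcl p φ hp hp'
  refine ⟨p, hpS, ?_⟩
  obtain ⟨l, hl⟩ := hconv p hpS
  have hl0 : Tendsto (fun n => Q (z (φ n) - p)) atTop (nhds 0) := by
    have h3 := (hQc.tendsto (p - p)).comp (hp.sub_const p)
    simpa [hQ0, Function.comp_def] using h3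
  have : l = 0 := tendsto_nhds_unique (hl.comp hφ.tendsto_atTop) hl0
  subst this
  simpa using (hto _ hl).add_const p

/-! ### The primal-dual quadratic form -/

section PrimalDual

variable {k : ℕ} {X : Type*} [NormedAddCommGroup X] [InnerProductSpace ℝ X]

/-- The quadratic form of the primal-dual preconditioner on `X × X^k`, where `X^k` carries the
`ω`-weighted inner product. -/
noncomputable def pdForm (ω : Fin k → ℝ) (σ τ : ℝ) (w : X × (Fin k → X)) : ℝ :=
  τ⁻¹ * ‖w.1‖ ^ 2 + σ⁻¹ * ∑ i, ω i * ‖w.2 i‖ ^ 2 - 2 * ⟪w.1, ∑ i, ω i • w.2 i⟫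

theorem continuous_pdForm (ω : Fin k → ℝ) (σ τ : ℝ) :
    Continuous (pdForm (X := X) ω σ τ) := by
  unfold pdForm
  fun_prop

theorem norm_weighted_sum_sq_le {ω : Fin k → ℝ} (hω : ∀ i, 0 < ω i) (hωsum : ∑ i, ω i = 1)
    (b : Fin k → X) : ‖∑ i, ω i • b i‖ ^ 2 ≤ ∑ i, ω i * ‖b i‖ ^ 2 := by
  have h1 : ‖∑ i, ω i • b i‖ ≤ ∑ i, ω i * ‖b i‖ := by
    refine (norm_sum_le _ _).trans (le_of_eq ?_)
    simp [norm_smul, abs_of_pos (hω _)]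
  refine (pow_le_pow_left₀ (norm_nonneg _) h1 2).trans ?_
  -- Jensen's inequality for the square.
  simpa only [smul_eq_mul] using (convexOn_pow 2).map_sum_le (t := Finset.univ) (w := ω)
    (p := fun i => ‖b i‖) (fun i _ => (hω i).le) hωsum (fun i _ => norm_nonneg (b i))

theorem exists_pdForm_lower {ω : Fin k → ℝ} (hk : 1 ≤ k) (hω : ∀ i, 0 < ω i)
    (hωsum : ∑ i, ω i = 1) {σ τ : ℝ} (hσ : 0 < σ) (hτ : 0 < τ) (hστ : σ * τ < 1) :
    ∃ c : ℝ, 0 < c ∧ ∀ w : X × (Fin k → X), c * ‖w‖ ^ 2 ≤ pdForm ω σ τ w := by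
  -- Young's inequality is applied with a weight `s` strictly between `σ` and `τ⁻¹`.
  obtain ⟨s, hs1, hs2⟩ : ∃ s, σ < s ∧ s < τ⁻¹ :=
    exists_between (by rwa [← one_div, lt_div_iff₀ hτ])
  have hs : 0 < s := hσ.trans hs1
  have hc1 : 0 < τ⁻¹ - s := by linarith
  have hc2 : 0 < σ⁻¹ - s⁻¹ := sub_pos.2 (inv_strictAnti₀ hσ hs1)
  have : Nonempty (Fin k) := ⟨⟨0, hk⟩⟩
  obtain ⟨j, hj⟩ := Finite.exists_min ω
  have hlow : ∀ w : X × (Fin k → X),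
      (τ⁻¹ - s) * ‖w.1‖ ^ 2 + (σ⁻¹ - s⁻¹) * ∑ i, ω i * ‖w.2 i‖ ^ 2 ≤ pdForm ω σ τ w := by
    intro w
    have h1 := norm_weighted_sum_sq_le hω hωsum w.2
    have h2 := real_inner_le_norm w.1 (∑ i, ω i • w.2 i)
    unfold pdForm
    set t := ‖∑ i, ω i • w.2 i‖
    have h3 : 2 * (‖w.1‖ * t) ≤ s * ‖w.1‖ ^ 2 + s⁻¹ * t ^ 2 := by
      have h4 : s * ‖w.1‖ ^ 2 + s⁻¹ * t ^ 2 - 2 * (‖w.1‖ * t) = s⁻¹ * (s * ‖w.1‖ - t) ^ 2 := by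
        field_simp
        ring
      have : 0 ≤ s⁻¹ * (s * ‖w.1‖ - t) ^ 2 := by positivity
      linarith
    have h5 := mul_le_mul_of_nonneg_left h1 (inv_pos.2 hs).le
    linarith
  refine ⟨min (τ⁻¹ - s) ((σ⁻¹ - s⁻¹) * ω j), lt_min hc1 (mul_pos hc2 (hω j)), fun w => ?_⟩
  refine le_trans ?_ (hlow w)
  have hSnn : 0 ≤ ∑ i, ω i * ‖w.2 i‖ ^ 2 :=
    Finset.sum_nonneg fun i _ => mul_nonneg (hω i).le (sq_nonneg _)
  have hS : ω j * ‖w.2‖ ^ 2 ≤ ∑ i, ω i * ‖w.2 i‖ ^ 2 := by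
    obtain ⟨i, hi⟩ := Finite.exists_max fun i => ‖w.2 i‖
    have hn : ‖w.2‖ = ‖w.2 i‖ :=
      le_antisymm ((pi_norm_le_iff_of_nonneg (norm_nonneg _)).2 hi) (norm_le_pi_norm _ i)
    rw [hn]
    refine (mul_le_mul_of_nonneg_right (hj i) (sq_nonneg _)).trans ?_
    exact Finset.single_le_sum (f := fun i => ω i * ‖w.2 i‖ ^ 2)
      (fun i _ => mul_nonneg (hω i).le (sq_nonneg _)) (Finset.mem_univ i)
  have hS' := mul_le_mul_of_nonneg_left hS hc2.le
  rcases le_total ‖w.1‖ ‖w.2‖ with h | h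
  · have hw : ‖w‖ = ‖w.2‖ := by rw [Prod.norm_def]; exact max_eq_right h
    rw [hw]
    have := mul_le_mul_of_nonneg_right (min_le_right (τ⁻¹ - s) ((σ⁻¹ - s⁻¹) * ω j))
      (sq_nonneg ‖w.2‖)
    have : 0 ≤ (τ⁻¹ - s) * ‖w.1‖ ^ 2 := by positivity
    linarith
  · have hw : ‖w‖ = ‖w.1‖ := by rw [Prod.norm_def]; exact max_eq_left h
    rw [hw]
    have := mul_le_mul_of_nonneg_right (min_le_left (τ⁻¹ - s) ((σ⁻¹ - s⁻¹) * ω j))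
      (sq_nonneg ‖w.1‖)
    have : 0 ≤ (σ⁻¹ - s⁻¹) * ∑ i, ω i * ‖w.2 i‖ ^ 2 := mul_nonneg hc2.le hSnn
    linarith

/-- One step of the recursion, from `(a, b)` to `(a', b')`, is Fejér monotone with respect to every
solution `(s, t)`. -/
theorem pdForm_step {B : Fin k → Set (X × X)} (hB : ∀ i, IsMonotoneOp (B i))
    {ω : Fin k → ℝ} (hω : ∀ i, 0 < ω i) {σ τ : ℝ} (hσ : 0 < σ) (hτ : 0 < τ)
    {s a a' : X} {t b b' : Fin k → X}
    (hst : ∀ i, (s, t i) ∈ B i) (ht : ∑ i, ω i • t i = 0)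
    (ha : a' = a - τ • ∑ i, ω i • b i)
    (hb : ∀ i, (σ⁻¹ • (b i + σ • ((2:ℝ) • a' - a) - b' i), b' i) ∈ B i) :
    pdForm ω σ τ ((a', b') - (s, t)) + pdForm ω σ τ ((a', b') - (a, b))
      ≤ pdForm ω σ τ ((a, b) - (s, t)) := by
  simp only [pdForm, Prod.fst_sub, Prod.snd_sub, Pi.sub_apply, smul_sub, Finset.sum_sub_distrib,
    ht, sub_zero]
  -- Twice the monotonicity inequality for `B i`, in polarized form.
  have hterm : ∀ i, 0 ≤ σ⁻¹ * (‖b i - t i‖ ^ 2 - ‖b' i - t i‖ ^ 2 - ‖b' i - b i‖ ^ 2)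
      + 2 * ⟪(2:ℝ) • (a' - s) - (a - s), b' i - t i⟫ := by
    intro i
    have h := hB i _ (hb i) _ (hst i)
    have e1 : σ⁻¹ • (b i + σ • ((2:ℝ) • a' - a) - b' i) - s
        = σ⁻¹ • (b i - b' i) + ((2:ℝ) • (a' - s) - (a - s)) := by
      have : σ⁻¹ • (b i + σ • ((2:ℝ) • a' - a) - b' i)
          = σ⁻¹ • (b i - b' i) + (σ⁻¹ * σ) • ((2:ℝ) • a' - a) := by
        rw [mul_smul, ← smul_add]
        congr 1
        abel
      rw [this, inv_mul_cancel₀ hσ.ne', one_smul]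
      module
    have e2 : ‖b i - t i‖ ^ 2 - ‖b' i - t i‖ ^ 2 - ‖b' i - b i‖ ^ 2
        = 2 * ⟪b i - b' i, b' i - t i⟫ := by
      have e3 : b i - t i = (b i - b' i) + (b' i - t i) := by abel
      rw [e3, norm_add_sq_real, norm_sub_rev (b' i) (b i)]
      ring
    simp only at h
    rw [e1, inner_add_left, real_inner_smul_left] at h
    rw [e2]
    linarith
  have hsum := Finset.sum_nonneg fun i (_ : i ∈ Finset.univ) =>
    mul_nonneg (hω i).le (hterm i)
  have hrew : ∑ i, ω i * (σ⁻¹ * (‖b i - t i‖ ^ 2 - ‖b' i - t i‖ ^ 2 - ‖b' i - b i‖ ^ 2)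
      + 2 * ⟪(2:ℝ) • (a' - s) - (a - s), b' i - t i⟫)
      = σ⁻¹ * (∑ i, ω i * ‖b i - t i‖ ^ 2 - ∑ i, ω i * ‖b' i - t i‖ ^ 2
          - ∑ i, ω i * ‖b' i - b i‖ ^ 2)
        + 2 * ⟪(2:ℝ) • (a' - s) - (a - s), ∑ i, ω i • b' i⟫ := by
    have e4 : ∑ i, ω i • b' i = ∑ i, ω i • (b' i - t i) := by
      simp [smul_sub, Finset.sum_sub_distrib, ht]
    rw [e4, inner_sum, ← Finset.sum_sub_distrib, ← Finset.sum_sub_distrib, Finset.mul_sum,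
      Finset.mul_sum, ← Finset.sum_add_distrib]
    refine Finset.sum_congr rfl fun i _ => ?_
    rw [real_inner_smul_right]
    ring
  rw [hrew] at hsum
  set p := ∑ i, ω i • b i
  set q := ∑ i, ω i • b' i
  have ea : a' - s = (a - s) - τ • p := by rw [ha]; abel
  have ea' : a' - a = -(τ • p) := by rw [ha]; abel
  rw [ea] at hsum ⊢
  rw [ea']
  have h1 : τ⁻¹ * ‖a - s - τ • p‖ ^ 2
      = τ⁻¹ * ‖a - s‖ ^ 2 - 2 * ⟪a - s, p⟫ + τ * ‖p‖ ^ 2 := by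
    rw [norm_sub_sq_real, real_inner_smul_right, norm_smul, Real.norm_of_nonneg hτ.le]
    field_simp
  have h2 : τ⁻¹ * ‖-(τ • p)‖ ^ 2 = τ * ‖p‖ ^ 2 := by
    rw [norm_neg, norm_smul, Real.norm_of_nonneg hτ.le]
    field_simp
  rw [h1, h2]
  simp only [inner_sub_left, inner_sub_right, inner_neg_left, real_inner_smul_left,
    real_inner_self_eq_norm_sq] at hsum ⊢
  linarith

end PrimalDual

/-! ### Convergence of the recursion -/

theorem stmt_9
    {k : ℕ} (hk : 1 ≤ k)
    {X : Type*} [NormedAddCommGroup X] [InnerProductSpace ℝ X] [FiniteDimensional ℝ X]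
    (B : Fin k → Set (X × X)) (hB : ∀ i, IsMaxMonotoneOp (B i))
    (ω : Fin k → ℝ) (hω : ∀ i, 0 < ω i ∧ ω i ≤ 1) (hωsum : ∑ i, ω i = 1)
    (σ τ : ℝ) (hσ : 0 < σ) (hτ : 0 < τ) (hστ : σ * τ < 1)
    (hsol : ∃ (x : X) (v : Fin k → X),
      (∀ i, (x, v i) ∈ B i) ∧ ∑ i, ω i • v i = 0)
    (x xb : ℕ → X) (y : ℕ → Fin k → X)
    (hxb0 : xb 0 = x 0)
    (hy : ∀ (n : ℕ) (i : Fin k),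
      (σ⁻¹ • (y n i + σ • xb n - y (n+1) i), y (n+1) i) ∈ B i)
    (hx : ∀ n : ℕ, x (n+1) = x n - τ • ∑ i, ω i • y (n+1) i)
    (hxbn : ∀ n : ℕ, xb (n+1) = (2:ℝ) • x (n+1) - x n) :
    ∃ (xs : X) (ys : Fin k → X),
      (∀ i, (xs, ys i) ∈ B i) ∧ ∑ i, ω i • ys i = 0 ∧
      Tendsto x atTop (nhds xs) ∧
      ∀ i, Tendsto (fun n => y n i) atTop (nhds (ys i)) := by
  have hω0 : ∀ i, 0 < ω i := fun i => (hω i).1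
  obtain ⟨c, hc, hQ⟩ := exists_pdForm_lower (X := X) hk hω0 hωsum hσ hτ hστ
  obtain ⟨x₀, v₀, hv₀, hv₀'⟩ := hsol
  have : ProperSpace X := FiniteDimensional.proper_real X
  have hy' : ∀ n i, (σ⁻¹ • (y (n+1) i + σ • ((2:ℝ) • x (n+1) - x n) - y (n+1+1) i),
      y (n+1+1) i) ∈ B i := fun n i => by
    rw [← hxbn]
    exact hy (n+1) i
  obtain ⟨s, ⟨hs1, hs2⟩, hs⟩ := fejer_tendsto (continuous_pdForm (X := X) ω σ τ)
    (by simp [pdForm]) hc hQ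
    (S := {s : X × (Fin k → X) | (∀ i, (s.1, s.2 i) ∈ B i) ∧ ∑ i, ω i • s.2 i = 0})
    ⟨(x₀, v₀), hv₀, hv₀'⟩ (z := fun n => (x n, y (n+1)))
    (fun s hs n => pdForm_step (fun i => (hB i).1) hω0 hσ hτ hs.1 hs.2 (hx n) (hy' n))
    (by
      intro p φ h1 h2
      have hx1 : Tendsto (fun n => x (φ n)) atTop (nhds p.1) := (continuous_fst.tendsto p).comp h1
      have hx2 : Tendsto (fun n => x (φ n + 1)) atTop (nhds p.1) :=
        (continuous_fst.tendsto p).comp h2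
      have hy1 : ∀ i, Tendsto (fun n => y (φ n + 1) i) atTop (nhds (p.2 i)) := fun i =>
        (((continuous_apply i).comp continuous_snd).tendsto p).comp h1
      have hy2 : ∀ i, Tendsto (fun n => y (φ n + 1 + 1) i) atTop (nhds (p.2 i)) := fun i =>
        (((continuous_apply i).comp continuous_snd).tendsto p).comp h2
      refine ⟨fun i => (hB i).mem_of_tendsto (fun n => hy' (φ n) i) ?_ (hy2 i), ?_⟩
      · have h3 := (((hy1 i).add (((hx2.const_smul (2:ℝ)).sub hx1).const_smul σ)).sub
          (hy2 i)).const_smul σ⁻¹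
        convert h3 using 2
        rw [add_sub_cancel_left, smul_smul, inv_mul_cancel₀ hσ.ne', one_smul, two_smul,
          add_sub_cancel_right]
      · have h3 : Tendsto (fun n => ∑ i, ω i • y (φ n + 1) i) atTop
            (nhds (∑ i, ω i • p.2 i)) :=
          tendsto_finsetSum _ fun i _ => (hy1 i).const_smul (ω i)
        have h4 : Tendsto (fun n => τ⁻¹ • (x (φ n) - x (φ n + 1))) atTop (nhds 0) := by
          simpa using (hx1.sub hx2).const_smul τ⁻¹
        refine tendsto_nhds_unique h3 (h4.congr fun n => ?_)
        rw [hx, sub_sub_cancel, smul_smul, inv_mul_cancel₀ hτ.ne', one_smul])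
  refine ⟨s.1, s.2, hs1, hs2, (continuous_fst.tendsto s).comp hs, fun i => ?_⟩
  -- The dual component of the sequence is shifted by one index.
  rw [← tendsto_add_atTop_iff_nat 1]
  exact (((continuous_apply i).comp continuous_snd).tendsto s).comp hs
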